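/- There exists a constant C > 0 such that for all integers n ≥ 1, v ≥ 1, and 0 ≤ i ≤ v with v² ≤ n, one has | binom(v,i)·binom(n−v, v−i) / binom(n,v) − (v)_i² / (i!·n^i) | ≤ C·(v²/n)·(v)_i² / (i!·n^i); in particular, binom(v,i)·binom(n−v, v−i)/binom(n,v) = (1 + O(v²/n))·(v)_i²/(i!·n^i) uniformly over 0 ≤ i ≤ v when v = o(√n). -/

import Mathlib

/-!
Write `k = v - i` and `x = v² / n`. Since `binom(v,i) binom(n,v) = binom(n,i) binom(n-i,k)`, the
hypergeometric ratio is `(v)_i² / (i! n^i)` times the product of `n^i / (n)_i` and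
`binom(n-v,k) / binom(n-i,k)`. The first factor lies in `[1, exp x]`. The second is the probability
that a random `k`-subset of an `(n-i)`-set avoids a fixed `k`-subset, so by the union bound it lies
in `[1 - x, 1]`. Hence the product differs from `1` by at most `exp x * x`.
-/

lemma natCast_add_one_pow_le_exp_mul_pow {n : ℕ} (hn : 0 < n) (k : ℕ) :
    ((n : ℝ) + 1) ^ k ≤ Real.exp (k / n) * (n : ℝ) ^ k := by
  have hn' : (0 : ℝ) < n := Nat.cast_pos.2 hn
  calc ((n : ℝ) + 1) ^ k = ((1 / n : ℝ) + 1) ^ k * (n : ℝ) ^ k := by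
        rw [← mul_pow, add_mul, one_div_mul_cancel hn'.ne', one_mul, add_comm]
    _ ≤ Real.exp (1 / n) ^ k * (n : ℝ) ^ k := by
        gcongr
        exact Real.add_one_le_exp _
    _ = Real.exp (k / n) * (n : ℝ) ^ k := by rw [← Real.exp_nat_mul, mul_one_div]

/- Both `n` and `k` grow by one in the induction: raising `k` alone would cost a factor
`n / (n - k)`, which is too large when `k` is close to `n`. -/
lemma pow_le_exp_mul_descFactorial {n k : ℕ} (hkn : k ≤ n) :
    (n : ℝ) ^ k ≤ Real.exp ((k : ℝ) ^ 2 / n) * n.descFactorial k := by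
  induction k generalizing n with
  | zero => simp
  | succ k ih =>
    obtain ⟨n, rfl⟩ : ∃ m, n = m + 1 := Nat.exists_eq_add_one.2 (by lia)
    rcases n.eq_zero_or_pos with rfl | hn
    · obtain rfl : k = 0 := by lia
      simp
    have hn' : (0 : ℝ) < n := Nat.cast_pos.2 hn
    have hkn' : (k : ℝ) ≤ n := by exact_mod_cast Nat.le_of_succ_le_succ hkn
    have exponent_le : (k : ℝ) / n + (k : ℝ) ^ 2 / n ≤ ((k : ℝ) + 1) ^ 2 / (n + 1) := by
      rw [← add_div, div_le_div_iff₀ hn' (by positivity)]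
      nlinarith [mul_nonneg (sub_nonneg.2 hkn') (by positivity : (0 : ℝ) ≤ k + 1)]
    push_cast [Nat.succ_descFactorial_succ]
    calc ((n : ℝ) + 1) ^ (k + 1) = (n + 1) * ((n : ℝ) + 1) ^ k := pow_succ' _ _
      _ ≤ (n + 1) * (Real.exp (k / n) * (n : ℝ) ^ k) := by
          gcongr
          exact natCast_add_one_pow_le_exp_mul_pow hn k
      _ ≤ (n + 1) * (Real.exp (k / n) * (Real.exp ((k : ℝ) ^ 2 / n) * n.descFactorial k)) := by
          gcongr
          exact ih (Nat.le_of_succ_le_succ hkn)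
      _ = Real.exp (k / n + (k : ℝ) ^ 2 / n) * ((n + 1) * n.descFactorial k) := by
          rw [Real.exp_add]
          ring
      _ ≤ Real.exp (((k : ℝ) + 1) ^ 2 / (n + 1)) * ((n + 1) * n.descFactorial k) := by
          gcongr

/- The union bound: a `(k + 1)`-subset of an `(n + 1)`-set that meets a given `s`-subset contains
one of its `s` points. -/
lemma succ_choose_succ_le_add_mul_choose (n k s : ℕ) :
    (n + 1).choose (k + 1) ≤ (n + 1 - s).choose (k + 1) + s * n.choose k := by
  induction s with
  | zero => simp
  | succ s ih =>
    have pascal : (n + 1 - s).choose (k + 1) ≤ (n - s).choose k + (n - s).choose (k + 1) := by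
      rcases le_or_gt s n with hsn | hns
      · rw [Nat.succ_sub hsn, Nat.choose_succ_succ']
      · simp [Nat.sub_eq_zero_of_le hns]
    have mono : (n - s).choose k ≤ n.choose k := Nat.choose_le_choose k (Nat.sub_le n s)
    rw [Nat.add_sub_add_right, Nat.succ_mul]
    lia

lemma one_sub_mul_choose_le_choose_sub (n k s : ℕ) :
    (1 - (s * k : ℝ) / n) * n.choose k ≤ (n - s).choose k := by
  rcases k with - | k
  · simp
  rcases n with - | n
  · simp
  have absorption : ((n : ℝ) + 1) * n.choose k = (n + 1).choose (k + 1) * (k + 1) := by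
    exact_mod_cast Nat.add_one_mul_choose_eq n k
  have union_bound : ((n + 1).choose (k + 1) : ℝ) ≤
      (n + 1 - s).choose (k + 1) + s * n.choose k := by
    exact_mod_cast succ_choose_succ_le_add_mul_choose n k s
  calc (1 - (s * (k + 1 : ℕ) : ℝ) / (n + 1 : ℕ)) * (n + 1).choose (k + 1)
      = (n + 1).choose (k + 1) - s * n.choose k := by
        push_cast
        field_simp
        linear_combination (s : ℝ) * absorption
    _ ≤ (n + 1 - s).choose (k + 1) := by linarith

lemma choose_mul_choose_div_choose_eq {n v i : ℕ} (hiv : i ≤ v) (hvn : v ≤ n) :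
    (v.choose i : ℝ) * (n - v).choose (v - i) / n.choose v =
      (n : ℝ) ^ i / n.descFactorial i * ((n - v).choose (v - i) / (n - i).choose (v - i)) *
        ((v.descFactorial i : ℝ) ^ 2 / (i.factorial * (n : ℝ) ^ i)) := by
  have choose_mul : (n.choose v : ℝ) * v.choose i = n.choose i * (n - i).choose (v - i) := by
    exact_mod_cast Nat.choose_mul (n := n) hiv
  have hpow : (n : ℝ) ^ i ≠ 0 := by
    exact_mod_cast ((Nat.descFactorial_pos.2 (hiv.trans hvn)).trans_le
      (Nat.descFactorial_le_pow n i)).ne'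
  have hnv : (n.choose v : ℝ) ≠ 0 := by exact_mod_cast (Nat.choose_pos hvn).ne'
  have hni : (n.choose i : ℝ) ≠ 0 := by exact_mod_cast (Nat.choose_pos (hiv.trans hvn)).ne'
  have hnivi : ((n - i).choose (v - i) : ℝ) ≠ 0 := by
    exact_mod_cast (Nat.choose_pos (Nat.sub_le_sub_right hvn i)).ne'
  simp only [Nat.descFactorial_eq_factorial_mul_choose, Nat.cast_mul]
  field_simp
  linear_combination (-(v.choose i : ℝ) * (n - v).choose (v - i)) * choose_mul

lemma one_le_pow_div_descFactorial {n k : ℕ} (hkn : k ≤ n) :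
    1 ≤ (n : ℝ) ^ k / n.descFactorial k := by
  rw [one_le_div (by exact_mod_cast Nat.descFactorial_pos.2 hkn)]
  exact_mod_cast Nat.descFactorial_le_pow n k

lemma pow_div_descFactorial_le_exp {n k : ℕ} (hkn : k ≤ n) :
    (n : ℝ) ^ k / n.descFactorial k ≤ Real.exp ((k : ℝ) ^ 2 / n) := by
  rw [div_le_iff₀ (by exact_mod_cast Nat.descFactorial_pos.2 hkn)]
  exact pow_le_exp_mul_descFactorial hkn

lemma sq_div_le_add_sq_div_add {a b c : ℝ} (ha : 0 ≤ a) (hb : 0 ≤ b) (hbc : b ≤ c) :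
    b ^ 2 / c ≤ (a + b) ^ 2 / (a + c) := by
  rcases (hb.trans hbc).eq_or_lt with rfl | hc
  · simpa using by positivity
  rw [div_le_div_iff₀ hc (by positivity)]
  have hab : a * b * b ≤ a * b * c := by gcongr
  nlinarith [mul_nonneg (mul_nonneg ha hb) hc.le, mul_nonneg (mul_nonneg ha ha) hc.le]

lemma one_sub_sq_div_le_choose_div_choose {n v i : ℕ} (hiv : i ≤ v) (hvn : v ≤ n) :
    1 - (v : ℝ) ^ 2 / n ≤ (n - v).choose (v - i) / (n - i).choose (v - i) := by
  have hdiv : ((v - i : ℕ) * (v - i : ℕ) : ℝ) / (n - i : ℕ) ≤ (v : ℝ) ^ 2 / n := by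
    have hsq := sq_div_le_add_sq_div_add i.cast_nonneg (v - i).cast_nonneg
      (Nat.cast_le (α := ℝ).2 (Nat.sub_le_sub_right hvn i))
    rwa [sq ((v - i : ℕ) : ℝ), ← Nat.cast_add, ← Nat.cast_add, Nat.add_sub_cancel' hiv,
      Nat.add_sub_cancel' (hiv.trans hvn)] at hsq
  have hunion := one_sub_mul_choose_le_choose_sub (n - i) (v - i) (v - i)
  rw [Nat.sub_sub_sub_cancel_right hiv] at hunion
  rw [le_div_iff₀ (by exact_mod_cast Nat.choose_pos (Nat.sub_le_sub_right hvn i))]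
  calc (1 - (v : ℝ) ^ 2 / n) * (n - i).choose (v - i)
      ≤ (1 - ((v - i : ℕ) * (v - i : ℕ) : ℝ) / (n - i : ℕ)) * (n - i).choose (v - i) := by gcongr
    _ ≤ (n - v).choose (v - i) := hunion

lemma abs_mul_sub_one_le_exp_mul {a b x : ℝ} (ha : 1 ≤ a) (hax : a ≤ Real.exp x) (hb : 0 ≤ b)
    (hb' : b ≤ 1) (hxb : 1 - x ≤ b) : |a * b - 1| ≤ Real.exp x * x := by
  have hexp : Real.exp x - 1 ≤ Real.exp x * x := by
    have hmul : Real.exp x * (1 - x) ≤ Real.exp x * Real.exp (-x) := by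
      gcongr
      exact Real.one_sub_le_exp_neg x
    rw [← Real.exp_add, add_neg_cancel, Real.exp_zero] at hmul
    linarith
  have hx : x ≤ Real.exp x * x :=
    le_mul_of_one_le_left (Real.one_le_exp_iff.1 (ha.trans hax)) (ha.trans hax)
  rw [abs_le]
  constructor
  · linarith [le_mul_of_one_le_left hb ha]
  · linarith [mul_le_of_le_one_right (zero_le_one.trans ha) hb']

theorem stmt19_general {n v i : ℕ} (hiv : i ≤ v) (hvn : v ≤ n) :
    |(v.choose i : ℝ) * (n - v).choose (v - i) / n.choose v -
        (v.descFactorial i : ℝ) ^ 2 / (i.factorial * (n : ℝ) ^ i)| ≤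
      Real.exp ((v : ℝ) ^ 2 / n) * ((v : ℝ) ^ 2 / n) *
        (v.descFactorial i : ℝ) ^ 2 / (i.factorial * (n : ℝ) ^ i) := by
  have hexp : (n : ℝ) ^ i / n.descFactorial i ≤ Real.exp ((v : ℝ) ^ 2 / n) :=
    (pow_div_descFactorial_le_exp (hiv.trans hvn)).trans (by gcongr)
  have hle_one : ((n - v).choose (v - i) : ℝ) / (n - i).choose (v - i) ≤ 1 :=
    div_le_one_of_le₀ (by gcongr) (Nat.cast_nonneg _)
  have hcorrection := abs_mul_sub_one_le_exp_mul (one_le_pow_div_descFactorial (hiv.trans hvn))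
    hexp (by positivity) hle_one (one_sub_sq_div_le_choose_div_choose hiv hvn)
  rw [choose_mul_choose_div_choose_eq hiv hvn, ← sub_one_mul, abs_mul, mul_div_assoc _ (_ ^ 2),
    abs_of_nonneg (by positivity : 0 ≤ (v.descFactorial i : ℝ) ^ 2 / _)]
  gcongr

/-- Hypergeometric ratio asymptotics: there is an absolute constant
`C > 0` such that for all `n ≥ 1`, `v ≥ 1` and `0 ≤ i ≤ v` with `v² ≤ n`,
`| binom(v,i)·binom(n−v,v−i)/binom(n,v) − (v)_i²/(i!·n^i) |
  ≤ C·(v²/n)·(v)_i²/(i!·n^i)`. -/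
theorem stmt19 : ∃ C : ℝ, 0 < C ∧ ∀ n v i : ℕ, 1 ≤ n → 1 ≤ v → i ≤ v → v ^ 2 ≤ n →
    |((v.choose i : ℝ) * ((n - v).choose (v - i) : ℝ) / (n.choose v : ℝ))
        - ((v.descFactorial i : ℝ)) ^ 2 / ((i.factorial : ℝ) * (n : ℝ) ^ i)|
      ≤ C * ((v : ℝ) ^ 2 / (n : ℝ))
        * ((v.descFactorial i : ℝ)) ^ 2 / ((i.factorial : ℝ) * (n : ℝ) ^ i) := by
  refine ⟨Real.exp 1, Real.exp_pos 1, fun n v i _ _ hiv hvn =>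
    (stmt19_general hiv ((Nat.le_self_pow two_ne_zero v).trans hvn)).trans ?_⟩
  gcongr
  exact div_le_one_of_le₀ (by exact_mod_cast hvn) n.cast_nonneg
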